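/- arXiv:1604.05439 — 2 statements merged into one kernel-verified Lean document; each statement's English description precedes it below -/
import Mathlib

section
/- Let E be a graph with finitely many vertices and let γ ∈ Γ_E be a component of E. Then the saturation of H(γ) \ γ is the largest proper saturated hereditary subset of the saturation of H(γ): it is saturated, hereditary, properly contained in the saturation of H(γ), and it contains every saturated hereditary set that is properly contained in the saturation of H(γ). -/
attribute [local instance] Classical.propDecidable

/-- A directed graph: a set of vertices, a set of edges, and source/range maps. -/
structure DirGraph : Type 1 where
  V : Type
  E : Type
  s : E → V
  r : E → V

namespace DirGraph

variable (G : DirGraph)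

/-- A vertex is regular if it emits a finite nonzero number of edges. -/
def Regular (v : G.V) : Prop :=
  {e : G.E | G.s e = v}.Finite ∧ {e : G.E | G.s e = v}.Nonempty

/-- A vertex is a sink if it emits no edges. -/
def IsSink (v : G.V) : Prop := ∀ e : G.E, G.s e ≠ v

/-- A vertex is an infinite emitter if it emits infinitely many edges. -/
def InfiniteEmitter (v : G.V) : Prop := {e : G.E | G.s e = v}.Infinite

/-- One-step reachability: there is an edge from `u` to `v`. -/
def Step (u v : G.V) : Prop := ∃ e : G.E, G.s e = u ∧ G.r e = v

/-- `Reach u v` means there is a (possibly empty) path from `u` to `v`, i.e. `u ≥ v`. -/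
def Reach : G.V → G.V → Prop := Relation.ReflTransGen G.Step

/-- A vertex supports a cycle if there is a nonempty path from it to itself. -/
def SupportsCycle (v : G.V) : Prop := Relation.TransGen G.Step v v

/-- A transition state is a regular vertex which does not support a cycle. -/
def TransitionState (v : G.V) : Prop := G.Regular v ∧ ¬ G.SupportsCycle v

/-- A set of vertices is hereditary if it is closed under reachability. -/
def Hereditary (H : Set G.V) : Prop := ∀ u v : G.V, u ∈ H → G.Reach u v → v ∈ H

/-- A set of vertices is saturated if it contains every regular vertex all of whose
emitted edges end in the set. -/
def Saturated (S : Set G.V) : Prop :=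
  ∀ v : G.V, G.Regular v → (∀ e : G.E, G.s e = v → G.r e ∈ S) → v ∈ S

/-- `H(S)`: the smallest hereditary set containing `S`. -/
def heredClosure (S : Set G.V) : Set G.V := ⋂₀ {H : Set G.V | G.Hereditary H ∧ S ⊆ H}

/-- The saturation of `S`: the smallest saturated set containing `S`. -/
def saturate (S : Set G.V) : Set G.V := ⋂₀ {T : Set G.V | G.Saturated T ∧ S ⊆ T}

/-- A nonempty set is strongly connected if any two of its vertices are joined by
a nonempty path. -/
def StronglyConn (S : Set G.V) : Prop :=
  S.Nonempty ∧ ∀ u ∈ S, ∀ v ∈ S, Relation.TransGen G.Step u v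

/-- The components of `G` (elements of `Γ_E`): maximal strongly connected subsets together
with singletons of singular vertices not supporting a cycle. -/
def IsComponent (γ : Set G.V) : Prop :=
  (G.StronglyConn γ ∧ ∀ δ : Set G.V, G.StronglyConn δ → γ ⊆ δ → δ = γ) ∨
  (∃ v : G.V, γ = {v} ∧ ¬ G.Regular v ∧ ¬ G.SupportsCycle v)

/-- The order on components: `γ ≥ δ` iff some vertex of `γ` reaches some vertex of `δ`. -/
def CompGE (γ δ : Set G.V) : Prop := ∃ u ∈ γ, ∃ w ∈ δ, G.Reach u w

/-- `η` is a hereditary set of components. -/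
def HeredComp (η : Set (Set G.V)) : Prop :=
  (∀ γ ∈ η, G.IsComponent γ) ∧
  ∀ γ δ : Set G.V, γ ∈ η → G.IsComponent δ → G.CompGE γ δ → δ ∈ η

/-- A list of edges is a path if consecutive edges are composable. -/
def IsPathChain (p : List G.E) : Prop := List.Chain' (fun e f => G.r e = G.s f) p

/-- `p` is a return path based at `v`: a nonempty path from `v` to `v` not revisiting `v`
before the final edge. -/
def IsReturnPath (v : G.V) (p : List G.E) : Prop :=
  ∃ h : p ≠ [], G.IsPathChain p ∧ G.s (p.head h) = v ∧ G.r (p.getLast h) = v ∧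
    ∀ e ∈ p.dropLast, G.r e ≠ v

/-- `v` supports (at least) two distinct return paths. -/
def TwoReturnPaths (v : G.V) : Prop :=
  ∃ p q : List G.E, G.IsReturnPath v p ∧ G.IsReturnPath v q ∧ p ≠ q

/-- `v` supports a unique return path. -/
def UniqueReturnPath (v : G.V) : Prop := ∃! p : List G.E, G.IsReturnPath v p

/-- A component is cyclic if each of its vertices supports exactly one return path. -/
def CyclicComponent (γ : Set G.V) : Prop :=
  G.IsComponent γ ∧ ∀ v ∈ γ, G.UniqueReturnPath v

/-- Condition (K): every vertex supports either no return path or at least two. -/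
def ConditionK : Prop :=
  ∀ v : G.V, (¬ ∃ p : List G.E, G.IsReturnPath v p) ∨ G.TwoReturnPaths v

/-- The cycle (or path) `p` has an exit. -/
def HasExit (p : List G.E) : Prop := ∃ f e : G.E, e ∈ p ∧ G.s f = G.s e ∧ f ≠ e

/-- `p` is a nonempty path from `v` to `w`. -/
def IsPathFromTo (v w : G.V) (p : List G.E) : Prop :=
  ∃ h : p ≠ [], G.IsPathChain p ∧ G.s (p.head h) = v ∧ G.r (p.getLast h) = w

/-- Condition (H). -/
def ConditionH : Prop :=
  ∀ v : G.V, G.Regular v → G.UniqueReturnPath v →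
    (∀ p : List G.E, G.IsReturnPath v p → ¬ G.HasExit p) ∨
    ∃ w : G.V, w ≠ v ∧ (¬ G.Regular w ∨ G.UniqueReturnPath w) ∧
      (∃ p : List G.E, G.IsPathFromTo v w p) ∧
      ∀ p : List G.E, G.IsPathFromTo v w p → ∀ e ∈ p,
        ¬ G.TwoReturnPaths (G.s e) ∧ ¬ G.TwoReturnPaths (G.r e)

/-- The temperature `τ_E(γ) = sgn(|γ¹| − |γ|)` of a set of vertices, with the conventions
`sgn(0) = 0` and `sgn(∞) = 1`. -/
noncomputable def temp (γ : Set G.V) : ℤ :=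
  if {e : G.E | G.s e ∈ γ ∧ G.r e ∈ γ}.Infinite then 1
  else Int.sign ((Nat.card {e : G.E | G.s e ∈ γ ∧ G.r e ∈ γ} : ℤ) - (Nat.card γ : ℤ))

end DirGraph

/-!
Two facts drive the argument. Saturating `S` adds no vertex of a set `γ` disjoint from `S`, as long
as every regular vertex of `γ` emits an edge into `γ`; for a component this holds because its
regular vertices lie on cycles that stay inside it. And intersecting with a hereditary set `M` can
be done before saturating: the range of every edge emitted by a vertex of `M` is again in `M`, so
the part of the saturation of `S` inside `M` is built from `M ∩ S` alone. A saturated hereditary `M`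
that meets `γ` contains the saturation of `H(γ)`; one that does not meets `H(γ)` within `H(γ) \ γ`,
and the second fact applies.
-/

namespace DirGraph

variable {G : DirGraph} {S T M γ : Set G.V} {u v w : G.V}

theorem hereditary_iff_forall_edge : G.Hereditary S ↔ ∀ e, G.s e ∈ S → G.r e ∈ S := by
  refine ⟨fun hS e he => hS _ _ he (.single ⟨e, rfl, rfl⟩), fun hS u v hu huv => ?_⟩
  induction huv with
  | refl => exact hu
  | tail _ hstep ih =>
    obtain ⟨e, rfl, rfl⟩ := hstep
    exact hS e ih

theorem subset_heredClosure (S : Set G.V) : S ⊆ G.heredClosure S :=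
  Set.subset_sInter fun _ hT => hT.2

theorem hereditary_heredClosure (S : Set G.V) : G.Hereditary (G.heredClosure S) :=
  fun u v hu huv T hT => hT.1 u v (hu T hT) huv

theorem heredClosure_subset (hT : G.Hereditary T) (hST : S ⊆ T) : G.heredClosure S ⊆ T :=
  Set.sInter_subset_of_mem ⟨hT, hST⟩

theorem mem_heredClosure_iff : w ∈ G.heredClosure S ↔ ∃ u ∈ S, G.Reach u w := by
  refine ⟨fun hw => ?_, fun ⟨u, hu, huw⟩ =>
    hereditary_heredClosure S u w (subset_heredClosure S hu) huw⟩
  have hered : G.Hereditary {w | ∃ u ∈ S, G.Reach u w} :=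
    fun _ _ ⟨u, hu, huv⟩ hvw => ⟨u, hu, huv.trans hvw⟩
  exact heredClosure_subset hered (fun u hu => ⟨u, hu, .refl⟩) hw

theorem hereditary_heredClosure_diff
    (hS : ∀ u ∈ S, ∀ v ∈ S, ∀ w, G.Reach u w → G.Reach w v → w ∈ S) :
    G.Hereditary (G.heredClosure S \ S) := by
  rintro w v ⟨hw, hwS⟩ hwv
  refine ⟨hereditary_heredClosure S w v hw hwv, fun hv => hwS ?_⟩
  obtain ⟨u, hu, huw⟩ := mem_heredClosure_iff.1 hw
  exact hS u hu v hv w huw hwv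

theorem subset_saturate (S : Set G.V) : S ⊆ G.saturate S :=
  Set.subset_sInter fun _ hT => hT.2

theorem saturated_saturate (S : Set G.V) : G.Saturated (G.saturate S) :=
  fun v hv hrange T hT => hT.1 v hv fun e he => hrange e he T hT

theorem saturate_subset (hT : G.Saturated T) (hST : S ⊆ T) : G.saturate S ⊆ T :=
  Set.sInter_subset_of_mem ⟨hT, hST⟩

theorem saturate_mono (hST : S ⊆ T) : G.saturate S ⊆ G.saturate T :=
  saturate_subset (saturated_saturate T) (hST.trans (subset_saturate T))

@[elab_as_elim]
theorem saturate_induction {p : ∀ v, v ∈ G.saturate S → Prop}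
    (mem : ∀ v (hv : v ∈ S), p v (subset_saturate S hv))
    (regular : ∀ v (hv : G.Regular v) (hrange : ∀ e, G.s e = v → G.r e ∈ G.saturate S),
      (∀ e he, p (G.r e) (hrange e he)) → p v (saturated_saturate S v hv hrange))
    (hv : v ∈ G.saturate S) : p v hv := by
  have hsat : G.Saturated {v | ∃ hv, p v hv} := fun v hv hp =>
    ⟨_, regular v hv (fun e he => (hp e he).1) fun e he => (hp e he).2⟩
  exact (saturate_subset hsat (fun v hv => ⟨_, mem v hv⟩) hv).2

theorem Hereditary.saturate (hS : G.Hereditary S) : G.Hereditary (G.saturate S) := by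
  refine hereditary_iff_forall_edge.2 fun e he => ?_
  generalize hv : G.s e = v at he
  induction he using saturate_induction with
  | mem v hvS => exact subset_saturate S (hereditary_iff_forall_edge.1 hS e (hv ▸ hvS))
  | regular v _ hrange _ => exact hrange e hv

theorem Hereditary.inter_saturate_subset (hM : G.Hereditary M) :
    M ∩ G.saturate S ⊆ G.saturate (M ∩ S) := by
  rintro v ⟨hvM, hv⟩
  induction hv using saturate_induction with
  | mem v hvS => exact subset_saturate _ ⟨hvM, hvS⟩
  | regular v hreg _ ih =>
    exact saturated_saturate _ v hreg fun e he =>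
      ih e he (hereditary_iff_forall_edge.1 hM e (he ▸ hvM))

theorem saturated_compl_iff :
    G.Saturated Sᶜ ↔ ∀ v ∈ S, G.Regular v → ∃ e, G.s e = v ∧ G.r e ∈ S := by
  refine forall_congr' fun v => ?_
  simp only [Set.mem_compl_iff]
  grind

protected theorem StronglyConn.insert (hS : G.StronglyConn S) (hu : u ∈ S) (hv : v ∈ S)
    (huw : G.Reach u w) (hwv : G.Reach w v) : G.StronglyConn (insert w S) := by
  have from_u : ∀ b ∈ insert w S, G.Reach u b := by
    rintro b (rfl | hb)
    exacts [huw, (hS.2 u hu b hb).to_reflTransGen]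
  have to_v : ∀ a ∈ insert w S, G.Reach a v := by
    rintro a (rfl | ha)
    exacts [hwv, (hS.2 a ha v hv).to_reflTransGen]
  exact ⟨Set.insert_nonempty w S, fun a ha b hb =>
    ((hS.2 v hv u hu).trans_right (to_v a ha)).trans_left (from_u b hb)⟩

namespace IsComponent

theorem nonempty (hγ : G.IsComponent γ) : γ.Nonempty := by
  rcases hγ with ⟨hconn, -⟩ | ⟨v, rfl, -⟩
  exacts [hconn.1, Set.singleton_nonempty v]

theorem reach (hγ : G.IsComponent γ) (hu : u ∈ γ) (hv : v ∈ γ) : G.Reach u v := by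
  rcases hγ with ⟨hconn, -⟩ | ⟨x, rfl, -⟩
  · exact (hconn.2 u hu v hv).to_reflTransGen
  · obtain rfl : u = x := hu
    obtain rfl : v = u := hv
    exact .refl

theorem mem_of_reach_of_reach (hγ : G.IsComponent γ) (hu : u ∈ γ) (hv : v ∈ γ)
    (huw : G.Reach u w) (hwv : G.Reach w v) : w ∈ γ := by
  rcases hγ with ⟨hconn, hmax⟩ | ⟨x, rfl, -, hacyclic⟩
  · rw [← hmax _ (hconn.insert hu hv huw hwv) (Set.subset_insert w γ)]
    exact Set.mem_insert w γ
  · obtain rfl : u = x := hu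
    obtain rfl : v = u := hv
    rcases Relation.reflTransGen_iff_eq_or_transGen.1 huw with rfl | huw
    · rfl
    · exact absurd (huw.trans_left hwv) hacyclic

theorem supportsCycle_of_regular (hγ : G.IsComponent γ) (hv : v ∈ γ) (hreg : G.Regular v) :
    G.SupportsCycle v := by
  rcases hγ with ⟨hconn, -⟩ | ⟨x, rfl, hsing, -⟩
  · exact hconn.2 v hv v hv
  · obtain rfl : v = x := hv
    exact absurd hreg hsing

theorem saturated_compl (hγ : G.IsComponent γ) : G.Saturated γᶜ := by
  refine saturated_compl_iff.2 fun v hv hreg => ?_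
  obtain ⟨_, ⟨e, rfl, rfl⟩, hback⟩ :=
    Relation.TransGen.head'_iff.1 (hγ.supportsCycle_of_regular hv hreg)
  exact ⟨e, rfl, hγ.mem_of_reach_of_reach hv hv (.single ⟨e, rfl, rfl⟩) hback⟩

theorem hereditary_heredClosure_diff (hγ : G.IsComponent γ) :
    G.Hereditary (G.heredClosure γ \ γ) :=
  DirGraph.hereditary_heredClosure_diff fun _ hu _ hv _ => hγ.mem_of_reach_of_reach hu hv

theorem saturate_heredClosure_diff_ne (hγ : G.IsComponent γ) :
    G.saturate (G.heredClosure γ \ γ) ≠ G.saturate (G.heredClosure γ) := by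
  obtain ⟨v, hv⟩ := hγ.nonempty
  have hmem : v ∈ G.saturate (G.heredClosure γ) := subset_saturate _ (subset_heredClosure γ hv)
  have hcompl : G.saturate (G.heredClosure γ \ γ) ⊆ γᶜ :=
    saturate_subset hγ.saturated_compl fun _ hw => hw.2
  exact fun heq => hcompl (heq ▸ hmem) hv

theorem saturate_heredClosure_subset (hγ : G.IsComponent γ) (hMs : G.Saturated M)
    (hMh : G.Hereditary M) (hmeet : (M ∩ γ).Nonempty) :
    G.saturate (G.heredClosure γ) ⊆ M := by
  obtain ⟨v, hvM, hvγ⟩ := hmeet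
  have hγM : γ ⊆ M := fun w hw => hMh v w hvM (hγ.reach hvγ hw)
  exact saturate_subset hMs (heredClosure_subset hMh hγM)

end IsComponent

end DirGraph

open DirGraph in
theorem stmt4_general (G : DirGraph) (γ : Set G.V) (hγ : G.IsComponent γ) :
    G.Saturated (G.saturate (G.heredClosure γ \ γ)) ∧
    G.Hereditary (G.saturate (G.heredClosure γ \ γ)) ∧
    G.saturate (G.heredClosure γ \ γ) ⊆ G.saturate (G.heredClosure γ) ∧
    G.saturate (G.heredClosure γ \ γ) ≠ G.saturate (G.heredClosure γ) ∧
    (∀ M : Set G.V, G.Saturated M → G.Hereditary M →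
      M ⊆ G.saturate (G.heredClosure γ) → M ≠ G.saturate (G.heredClosure γ) →
      M ⊆ G.saturate (G.heredClosure γ \ γ)) := by
  refine ⟨saturated_saturate _, hγ.hereditary_heredClosure_diff.saturate,
    saturate_mono Set.sdiff_subset, hγ.saturate_heredClosure_diff_ne,
    fun M hMs hMh hsub hne => ?_⟩
  have hdisj : ∀ v ∈ M, v ∉ γ := fun v hvM hvγ =>
    hne (hsub.antisymm (hγ.saturate_heredClosure_subset hMs hMh ⟨v, hvM, hvγ⟩))
  calc M ⊆ M ∩ G.saturate (G.heredClosure γ) := Set.subset_inter subset_rfl hsub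
    _ ⊆ G.saturate (M ∩ G.heredClosure γ) := hMh.inter_saturate_subset
    _ ⊆ G.saturate (G.heredClosure γ \ γ) := saturate_mono fun v hv => ⟨hv.2, hdisj v hv.1⟩

open DirGraph in
/-- Lemma `lem:structure-2(ii)`: for a component `γ` of a graph with
finitely many vertices, the saturation of `H(γ) \ γ` is the largest proper saturated
hereditary subset of the saturation of `H(γ)`. -/
theorem stmt4 (G : DirGraph) (hcE : Countable G.E) (hfin : Finite G.V)
    (γ : Set G.V) (hγ : G.IsComponent γ) :
    G.Saturated (G.saturate (G.heredClosure γ \ γ)) ∧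
    G.Hereditary (G.saturate (G.heredClosure γ \ γ)) ∧
    G.saturate (G.heredClosure γ \ γ) ⊆ G.saturate (G.heredClosure γ) ∧
    G.saturate (G.heredClosure γ \ γ) ≠ G.saturate (G.heredClosure γ) ∧
    (∀ M : Set G.V, G.Saturated M → G.Hereditary M →
      M ⊆ G.saturate (G.heredClosure γ) → M ≠ G.saturate (G.heredClosure γ) →
      M ⊆ G.saturate (G.heredClosure γ \ γ)) := by
  exact stmt4_general G γ hγ
end

section
/- Let E be a graph with finitely many vertices. Then E satisfies Condition (K) if and only if τ_E(γ) ≠ 0 for every component γ ∈ Γ_E; equivalently, if and only if no component of E is cyclic. -/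
attribute [local instance] Classical.propDecidable

/-!
Consider a vertex `v` on a cycle, and let `γ` be the component consisting of all vertices that
lie on a common closed path with `v`. The source map sends the internal edges of `γ` onto `γ`.
If it is injective, then a path from `v` back to `v` has no choice at any step, so the return
path at `v` is unique. Conversely, suppose that the return path `p` at `v` is unique. A vertex
`u` of `γ` can be reached from `v` by a path `t` such that `t ++ q` is a return path for every
path `q` which leads from `u` to `v` without an earlier visit to `v`. Hence there is only one
such `q`, and all its edges lie on `p`; so the source map is injective on the internal edges,
and these are finite in number. Thus the return path is unique exactly when `γ` has finitely
many, and equally many, vertices and internal edges.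
-/

namespace DirGraph

variable {G : DirGraph} {u v : G.V} {e : G.E} {p q : List G.E} {γ : Set G.V}

/-- `G.FirstPassage v u p` (target first) says that `p` is a first passage path from `u` to `v`: a
nonempty path whose edges, except for the last one, do not end at `v`. For `u = v` these are the
return paths based at `v`. -/
def FirstPassage (G : DirGraph) (v u : G.V) (p : List G.E) : Prop :=
  ∃ h : p ≠ [], G.IsPathChain p ∧ G.s (p.head h) = u ∧ G.r (p.getLast h) = v ∧
    ∀ e ∈ p.dropLast, G.r e ≠ v

theorem isPathChain_singleton : G.IsPathChain [e] :=
  List.isChain_singleton e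

theorem isPathChain_cons_cons {f : G.E} :
    G.IsPathChain (e :: f :: p) ↔ G.r e = G.s f ∧ G.IsPathChain (f :: p) :=
  List.isChain_cons_cons

theorem firstPassage_self : G.FirstPassage v v p ↔ G.IsReturnPath v p :=
  Iff.rfl

theorem not_firstPassage_nil : ¬ G.FirstPassage v u [] :=
  fun h => h.1 rfl

theorem firstPassage_cons_of_eq (he : G.r e = v) :
    G.FirstPassage v u (e :: p) ↔ G.s e = u ∧ p = [] := by
  cases p <;> simp [FirstPassage, isPathChain_singleton, he]

theorem firstPassage_cons_of_ne (he : G.r e ≠ v) :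
    G.FirstPassage v u (e :: p) ↔ G.s e = u ∧ G.FirstPassage v (G.r e) p := by
  cases p with
  | nil => simp [FirstPassage, he]
  | cons f p =>
    simp only [FirstPassage, ne_eq, reduceCtorEq, not_false_eq_true, exists_true_left,
      isPathChain_cons_cons, List.head_cons, List.getLast_cons_cons, List.dropLast_cons_cons,
      List.forall_mem_cons, he, true_and]
    grind

theorem FirstPassage.source_eq (h : G.FirstPassage v u (e :: p)) : G.s e = u :=
  h.2.2.1

theorem FirstPassage.reach_range (h : G.FirstPassage v u (e :: p)) : G.Reach (G.r e) v := by
  induction p generalizing u e with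
  | nil => exact h.2.2.2.1 ▸ .refl
  | cons f p ih =>
    by_cases he : G.r e = v
    · exact he ▸ .refl
    · have htail := ((firstPassage_cons_of_ne he).1 h).2
      exact .head ⟨f, htail.source_eq, rfl⟩ (ih htail)

theorem FirstPassage.transGen (h : G.FirstPassage v u p) : Relation.TransGen G.Step u v := by
  cases p with
  | nil => exact (not_firstPassage_nil h).elim
  | cons e p => exact .head' ⟨e, h.source_eq, rfl⟩ h.reach_range

theorem exists_firstPassage_cons (h : G.Reach (G.r e) v) :
    ∃ p, G.FirstPassage v (G.s e) (e :: p) := by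
  generalize hw : G.r e = w at h
  induction h using Relation.ReflTransGen.head_induction_on generalizing e with
  | refl => exact ⟨[], (firstPassage_cons_of_eq hw).2 ⟨rfl, rfl⟩⟩
  | head hstep _ ih =>
    by_cases he : G.r e = v
    · exact ⟨[], (firstPassage_cons_of_eq he).2 ⟨rfl, rfl⟩⟩
    · obtain ⟨f, hsf, hrf⟩ := hstep
      obtain ⟨p, hp⟩ := ih hrf
      exact ⟨f :: p, (firstPassage_cons_of_ne he).2 ⟨rfl, (hsf.trans hw.symm) ▸ hp⟩⟩

theorem exists_isReturnPath_append (h : G.Reach v u) :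
    ∃ t, ∀ q, G.FirstPassage v u q → G.IsReturnPath v (t ++ q) := by
  induction h with
  | refl => exact ⟨[], fun _ hq => hq⟩
  | tail _ hstep ih =>
    obtain ⟨t, ht⟩ := ih
    obtain ⟨e, hse, rfl⟩ := hstep
    by_cases he : G.r e = v
    · exact ⟨[], fun _ hq => firstPassage_self.1 (he ▸ hq)⟩
    · refine ⟨t ++ [e], fun q hq => ?_⟩
      rw [List.append_assoc]
      exact ht (e :: q) ((firstPassage_cons_of_ne he).2 ⟨hse, hq⟩)

/-- The set `γ¹` of edges with both endpoints in `γ`. -/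
def internalEdges (G : DirGraph) (γ : Set G.V) : Set G.E :=
  {e | G.s e ∈ γ ∧ G.r e ∈ γ}

theorem temp_eq_zero_iff :
    G.temp γ = 0 ↔ (G.internalEdges γ).Finite ∧ (G.internalEdges γ).ncard = γ.ncard := by
  change (if (G.internalEdges γ).Infinite then 1 else
    Int.sign ((Nat.card (G.internalEdges γ) : ℤ) - (Nat.card γ : ℤ))) = 0 ↔ _
  simp only [Nat.card_coe_set_eq]
  split_ifs with h
  · simp [h.not_finite]
  · simp [Set.not_infinite.1 h, Int.sign_eq_zero_iff_zero, sub_eq_zero]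

theorem temp_eq_zero_iff_injOn (hsurj : Set.SurjOn G.s (G.internalEdges γ) γ) :
    G.temp γ = 0 ↔
      (G.internalEdges γ).Finite ∧ Set.InjOn G.s (G.internalEdges γ) := by
  have himage : G.s '' G.internalEdges γ = γ :=
    hsurj.image_eq_of_mapsTo fun _ he => he.1
  rw [temp_eq_zero_iff]
  refine and_congr_right fun hfin => ?_
  rw [← Set.ncard_image_iff hfin, himage, eq_comm]

/-- The vertices lying on a common closed path with `v`; this is the component of `v` if `v`
supports a cycle, and it is empty otherwise. -/
def scc (G : DirGraph) (v : G.V) : Set G.V :=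
  {u | Relation.TransGen G.Step v u ∧ Relation.TransGen G.Step u v}

theorem stronglyConn_scc (hv : G.SupportsCycle v) : G.StronglyConn (G.scc v) :=
  ⟨⟨v, hv, hv⟩, fun _ hu _ hw => hu.2.trans hw.1⟩

theorem StronglyConn.subset_scc (hγ : G.StronglyConn γ) (hv : v ∈ γ) : γ ⊆ G.scc v :=
  fun u hu => ⟨hγ.2 v hv u hu, hγ.2 u hu v hv⟩

theorem isComponent_scc (hv : G.SupportsCycle v) : G.IsComponent (G.scc v) :=
  .inl ⟨stronglyConn_scc hv, fun _ hδ hsub => (hδ.subset_scc (hsub ⟨hv, hv⟩)).antisymm hsub⟩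

theorem IsComponent.eq_scc (hγ : G.IsComponent γ) (hv : v ∈ γ) (hcycle : G.SupportsCycle v) :
    γ = G.scc v := by
  rcases hγ with ⟨hconn, hmax⟩ | ⟨w, rfl, -, hw⟩
  · exact (hmax _ (stronglyConn_scc hcycle) (hconn.subset_scc hv)).symm
  · obtain rfl : v = w := hv
    exact absurd hcycle hw

theorem IsComponent.nonempty_s7 (hγ : G.IsComponent γ) : γ.Nonempty := by
  rcases hγ with ⟨hconn, -⟩ | ⟨v, rfl, -⟩
  · exact hconn.1
  · exact Set.singleton_nonempty v

theorem mem_internalEdges_scc (hs : G.s e ∈ G.scc v) (hr : G.Reach (G.r e) v) :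
    e ∈ G.internalEdges (G.scc v) :=
  ⟨hs, hs.1.tail ⟨e, rfl, rfl⟩, .trans_right hr (hs.1.trans hs.2)⟩

theorem surjOn_source_internalEdges_scc :
    Set.SurjOn G.s (G.internalEdges (G.scc v)) (G.scc v) := by
  intro u hu
  obtain ⟨_, ⟨e, rfl, rfl⟩, hr⟩ := Relation.TransGen.head'_iff.1 hu.2
  exact ⟨e, mem_internalEdges_scc hu hr, rfl⟩

theorem FirstPassage.eq_of_injOn (hinj : Set.InjOn G.s (G.internalEdges (G.scc v)))
    (hu : u ∈ G.scc v) (hp : G.FirstPassage v u p) (hq : G.FirstPassage v u q) : p = q := by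
  induction p generalizing u q with
  | nil => exact (not_firstPassage_nil hp).elim
  | cons e p ih =>
    cases q with
    | nil => exact (not_firstPassage_nil hq).elim
    | cons f q =>
      have he := mem_internalEdges_scc (hp.source_eq ▸ hu) hp.reach_range
      have hf := mem_internalEdges_scc (hq.source_eq ▸ hu) hq.reach_range
      obtain rfl := hinj he hf (hp.source_eq.trans hq.source_eq.symm)
      by_cases hr : G.r e = v
      · rw [((firstPassage_cons_of_eq hr).1 hp).2, ((firstPassage_cons_of_eq hr).1 hq).2]
      · rw [ih he.2 ((firstPassage_cons_of_ne hr).1 hp).2 ((firstPassage_cons_of_ne hr).1 hq).2]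

theorem uniqueReturnPath_of_injOn (hv : G.SupportsCycle v)
    (hinj : Set.InjOn G.s (G.internalEdges (G.scc v))) : G.UniqueReturnPath v := by
  obtain ⟨_, ⟨e, rfl, rfl⟩, hr⟩ := Relation.TransGen.head'_iff.1 hv
  obtain ⟨p, hp⟩ := exists_firstPassage_cons hr
  exact ⟨e :: p, hp, fun _ hq => FirstPassage.eq_of_injOn hinj ⟨hv, hv⟩ hq hp⟩

theorem UniqueReturnPath.supportsCycle (h : G.UniqueReturnPath v) : G.SupportsCycle v := by
  obtain ⟨p, hp, -⟩ := h
  exact (firstPassage_self.2 hp).transGen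

theorem UniqueReturnPath.injOn (h : G.UniqueReturnPath v) :
    Set.InjOn G.s (G.internalEdges (G.scc v)) := by
  intro e he f hf hef
  obtain ⟨t, ht⟩ := exists_isReturnPath_append he.1.1.to_reflTransGen
  obtain ⟨p, hp⟩ := exists_firstPassage_cons he.2.2.to_reflTransGen
  obtain ⟨q, hq⟩ := exists_firstPassage_cons hf.2.2.to_reflTransGen
  have happend : t ++ e :: p = t ++ f :: q := h.unique (ht _ hp) (ht _ (hef ▸ hq))
  exact (List.cons.inj (List.append_cancel_left happend)).1

theorem UniqueReturnPath.finite_internalEdges (h : G.UniqueReturnPath v) :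
    (G.internalEdges (G.scc v)).Finite := by
  obtain ⟨p, -, hp⟩ := h
  refine (List.finite_toSet p).subset fun e he => ?_
  obtain ⟨t, ht⟩ := exists_isReturnPath_append he.1.1.to_reflTransGen
  obtain ⟨q, hq⟩ := exists_firstPassage_cons he.2.2.to_reflTransGen
  have happend : t ++ e :: q = p := hp _ (ht _ hq)
  simp [← happend]

theorem uniqueReturnPath_iff_temp_scc_eq_zero (hv : G.SupportsCycle v) :
    G.UniqueReturnPath v ↔ G.temp (G.scc v) = 0 := by
  rw [temp_eq_zero_iff_injOn surjOn_source_internalEdges_scc]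
  exact ⟨fun h => ⟨h.finite_internalEdges, h.injOn⟩, fun h => uniqueReturnPath_of_injOn hv h.2⟩

theorem temp_singleton_ne_zero (hv : ¬ G.SupportsCycle v) : G.temp {v} ≠ 0 := by
  have hempty : G.internalEdges {v} = ∅ :=
    Set.eq_empty_of_forall_notMem fun e he => hv (.single ⟨e, he⟩)
  simp [temp_eq_zero_iff, hempty]

theorem IsComponent.supportsCycle_of_temp_eq_zero (hγ : G.IsComponent γ) (htemp : G.temp γ = 0)
    (hv : v ∈ γ) : G.SupportsCycle v := by
  rcases hγ with ⟨hconn, -⟩ | ⟨w, rfl, -, hw⟩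
  · exact hconn.2 v hv v hv
  · exact absurd htemp (temp_singleton_ne_zero hw)

theorem IsComponent.temp_eq_zero_iff_cyclicComponent (hγ : G.IsComponent γ) :
    G.temp γ = 0 ↔ G.CyclicComponent γ := by
  constructor
  · refine fun htemp => ⟨hγ, fun v hv => ?_⟩
    have hcycle := hγ.supportsCycle_of_temp_eq_zero htemp hv
    rwa [uniqueReturnPath_iff_temp_scc_eq_zero hcycle, ← hγ.eq_scc hv hcycle]
  · rintro ⟨-, hunique⟩
    obtain ⟨v, hv⟩ := hγ.nonempty_s7
    have hcycle := (hunique v hv).supportsCycle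
    rw [hγ.eq_scc hv hcycle, ← uniqueReturnPath_iff_temp_scc_eq_zero hcycle]
    exact hunique v hv

theorem UniqueReturnPath.cyclicComponent_scc (h : G.UniqueReturnPath v) :
    G.CyclicComponent (G.scc v) :=
  (isComponent_scc h.supportsCycle).temp_eq_zero_iff_cyclicComponent.1
    ((uniqueReturnPath_iff_temp_scc_eq_zero h.supportsCycle).1 h)

theorem conditionK_iff_forall_not_uniqueReturnPath :
    G.ConditionK ↔ ∀ v, ¬ G.UniqueReturnPath v := by
  refine forall_congr' fun v => ⟨?_, fun h => ?_⟩
  · rintro (hnone | ⟨p, q, hp, hq, hne⟩) hunique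
    · exact hnone hunique.exists
    · exact hne (hunique.unique hp hq)
  · by_contra! hcon
    obtain ⟨⟨p, hp⟩, htwo⟩ := hcon
    exact h ⟨p, hp, fun q hq => by_contra fun hne => htwo ⟨q, p, hq, hp, hne⟩⟩

theorem conditionK_iff_forall_not_cyclicComponent :
    G.ConditionK ↔ ∀ γ : Set G.V, G.IsComponent γ → ¬ G.CyclicComponent γ := by
  rw [conditionK_iff_forall_not_uniqueReturnPath]
  constructor
  · intro h γ hγ hcyclic
    obtain ⟨v, hv⟩ := hγ.nonempty_s7
    exact h v (hcyclic.2 v hv)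
  · intro h v hv
    exact h _ (isComponent_scc hv.supportsCycle) hv.cyclicComponent_scc

end DirGraph

open DirGraph in
theorem stmt7_general (G : DirGraph) :
    (G.ConditionK ↔ ∀ γ : Set G.V, G.IsComponent γ → G.temp γ ≠ 0) ∧
    (G.ConditionK ↔ ∀ γ : Set G.V, G.IsComponent γ → ¬ G.CyclicComponent γ) := by
  refine ⟨conditionK_iff_forall_not_cyclicComponent.trans ?_,
    conditionK_iff_forall_not_cyclicComponent⟩
  exact forall₂_congr fun _ hγ => not_congr hγ.temp_eq_zero_iff_cyclicComponent.symm

open DirGraph in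
/-- Lemma `charKH(i)`: a graph with finitely many vertices satisfies
Condition (K) iff `τ_E(γ) ≠ 0` for every component `γ ∈ Γ_E`; equivalently, iff no
component is cyclic. -/
theorem stmt7 (G : DirGraph) (hcE : Countable G.E) (hfin : Finite G.V) :
    (G.ConditionK ↔ ∀ γ : Set G.V, G.IsComponent γ → G.temp γ ≠ 0) ∧
    (G.ConditionK ↔ ∀ γ : Set G.V, G.IsComponent γ → ¬ G.CyclicComponent γ) :=
  stmt7_general G
end
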